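/- Soundness: For every formula φ of the language Φ, if ⊢ φ (φ is a theorem of the logical system of doxastic strategies), then w ⊨ φ for each state w of an arbitrary game. -/

import Mathlib

/- Language: formulas over atomic propositions P, data variables V, actors 𝒜 = A.
   `bel T X φ` is B^T_X φ ; `str C T X φ` is [C]^T_X φ. -/
inductive Formula (P V A : Type) : Type
  | atom : P → Formula P V A
  | neg : Formula P V A → Formula P V A
  | imp : Formula P V A → Formula P V A → Formula P V A
  | bel : Set V → Set V → Formula P V A → Formula P V A
  | str : Set A → Set V → Set V → Formula P V A → Formula P V A

variable {P V A : Type}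

/-- Propositional tautologies: true under every valuation respecting ¬ and →. -/
def Tautology (φ : Formula P V A) : Prop :=
  ∀ v : Formula P V A → Prop,
    (∀ ψ, v (Formula.neg ψ) ↔ ¬ v ψ) →
    (∀ ψ χ, v (Formula.imp ψ χ) ↔ (v ψ → v χ)) →
    v φ

/-- Theorems of the logical system of doxastic strategies. -/
inductive Thm : Formula P V A → Prop
  | taut {φ : Formula P V A} : Tautology φ → Thm φ
  | truth {X : Set V} {φ : Formula P V A} :
      Thm (Formula.imp (Formula.bel ∅ X φ) φ)
  | negIntro {T X : Set V} {φ : Formula P V A} :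
      Thm (Formula.imp (Formula.neg (Formula.bel T X φ))
        (Formula.bel ∅ X (Formula.neg (Formula.bel T X φ))))
  | distrib {T X : Set V} {φ ψ : Formula P V A} :
      Thm (Formula.imp (Formula.bel T X (Formula.imp φ ψ))
        (Formula.imp (Formula.bel T X φ) (Formula.bel T X ψ)))
  | trust {T X Y : Set V} {φ : Formula P V A} :
      Thm (Formula.bel T X (Formula.imp (Formula.bel T Y φ) φ))
  | monoB {T T' X X' : Set V} {φ : Formula P V A} :
      T ⊆ T' → X ⊆ X' →
      Thm (Formula.imp (Formula.bel T X φ) (Formula.bel T' X' φ))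
  | monoS {C C' : Set A} {T T' X X' : Set V} {φ : Formula P V A} :
      T ⊆ T' → X ⊆ X' → C ⊆ C' →
      Thm (Formula.imp (Formula.str C T X φ) (Formula.str C' T' X' φ))
  | coop {C D : Set A} {T X : Set V} {φ ψ : Formula P V A} :
      C ∩ D = ∅ →
      Thm (Formula.imp (Formula.str C T X (Formula.imp φ ψ))
        (Formula.imp (Formula.str D T X φ) (Formula.str (C ∪ D) T X ψ)))
  | strIntro₁ {C : Set A} {T X : Set V} {φ : Formula P V A} :
      Thm (Formula.imp (Formula.str C T X φ) (Formula.bel T X (Formula.str C T X φ)))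
  | strIntro₂ {C : Set A} {T X : Set V} {φ : Formula P V A} :
      Thm (Formula.imp (Formula.bel T X (Formula.str C T X φ)) (Formula.str C T X φ))
  | unavoid {T X Y : Set V} {φ : Formula P V A} :
      Thm (Formula.imp (Formula.bel T X (Formula.str ∅ T Y φ)) (Formula.str ∅ T X φ))
  | pub {T : Set V} {φ : Formula P V A} :
      Thm (Formula.imp (Formula.bel T ∅ φ) (Formula.str ∅ T ∅ φ))
  | mp {φ ψ : Formula P V A} : Thm (Formula.imp φ ψ) → Thm φ → Thm ψ
  | nec {φ : Formula P V A} : Thm φ → Thm (Formula.bel ∅ ∅ φ)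

/-- `Deduces F φ`: φ is derivable from F together with the theorems using only Modus Ponens. -/
inductive Deduces (F : Set (Formula P V A)) : Formula P V A → Prop
  | thm {φ : Formula P V A} : Thm φ → Deduces F φ
  | mem {φ : Formula P V A} : φ ∈ F → Deduces F φ
  | mp {φ ψ : Formula P V A} :
      Deduces F (Formula.imp φ ψ) → Deduces F φ → Deduces F ψ

def Consistent (F : Set (Formula P V A)) : Prop :=
  ¬ ∃ φ : Formula P V A, Deduces F φ ∧ Deduces F (Formula.neg φ)

def MaximalConsistent (F : Set (Formula P V A)) : Prop :=
  Consistent F ∧ ∀ G : Set (Formula P V A), Consistent G → F ⊆ G → F = G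

/-- A game. -/
structure Game (P V A : Type) : Type 1 where
  W : Type
  sim : V → W → W → Prop
  sim_equiv : ∀ x : V, Equivalence (sim x)
  trust : W → Set V
  Δ : Type
  delta_nonempty : Nonempty Δ
  M : W → (A → Δ) → W → Prop
  pi : P → Set W

/-- `w ∼_X u`. -/
def Game.simSet (G : Game P V A) (X : Set V) (w u : G.W) : Prop :=
  ∀ x ∈ X, G.sim x w u

/-- The satisfaction relation `w ⊨ φ` (as `Sat G φ w`). -/
def Sat (G : Game P V A) : Formula P V A → G.W → Prop
  | Formula.atom p, w => w ∈ G.pi p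
  | Formula.neg φ, w => ¬ Sat G φ w
  | Formula.imp φ ψ, w => Sat G φ w → Sat G ψ w
  | Formula.bel T X φ, w =>
      ∀ u : G.W, G.simSet X w u → T ⊆ G.trust u → Sat G φ u
  | Formula.str C T X φ, w =>
      ∃ s : {a : A // a ∈ C} → G.Δ,
        ∀ (u v : G.W) (δ : A → G.Δ),
          G.simSet X w u → T ⊆ G.trust u →
          (∀ (a : A) (h : a ∈ C), s ⟨a, h⟩ = δ a) →
          G.M u δ v → T ⊆ G.trust v → Sat G φ v

/- ===================== Canonical game ===================== -/

/-- One block `X_i, b_i, T_i, F_i` of a canonical state. -/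
structure Block (P V A B : Type) where
  X : Set V
  b : B
  T : Set V
  F : Set (Formula P V A)

variable {B : Type}

/-- `F(w)`: the last set of formulae of the sequence (or `F0` for the root). -/
def cF (F0 : Set (Formula P V A)) (l : List (Block P V A B)) : Set (Formula P V A) :=
  l.getLast?.elim F0 Block.F

/-- `𝒯_w = T(w)`: the last dataset of the sequence (or `T0` for the root). -/
def cTrust (T0 : Set V) (l : List (Block P V A B)) : Set V :=
  l.getLast?.elim T0 Block.T

/-- Membership of a sequence in the set of canonical states `W`. -/
inductive IsState (T0 : Set V) (F0 : Set (Formula P V A)) :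
    List (Block P V A B) → Prop
  | nil :
      (∀ (Y : Set V) (ψ : Formula P V A),
        Formula.imp (Formula.bel T0 Y ψ) ψ ∈ F0) →
      IsState T0 F0 []
  | snoc {l : List (Block P V A B)} {bl : Block P V A B} :
      IsState T0 F0 l →
      MaximalConsistent bl.F →
      (∀ φ : Formula P V A, Formula.bel ∅ bl.X φ ∈ cF F0 l → φ ∈ bl.F) →
      (∀ (Y : Set V) (ψ : Formula P V A),
        Formula.imp (Formula.bel bl.T Y ψ) ψ ∈ bl.F) →
      IsState T0 F0 (l ++ [bl])

/-- The canonical states. -/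
def CState (T0 : Set V) (F0 : Set (Formula P V A)) (B : Type) : Type :=
  {l : List (Block P V A B) // IsState T0 F0 l}

attribute [local instance] Classical.propDecidable

/-- Length of the longest common prefix of two sequences. -/
noncomputable def cpl {α : Type} : List α → List α → Nat
  | a :: as, b :: bs => if a = b then cpl as bs + 1 else 0
  | _, _ => 0

/-- The blocks labelling the edges on the unique simple path between two
nodes of the canonical tree. -/
noncomputable def pathBlocks (w u : List (Block P V A B)) : List (Block P V A B) :=
  w.drop (cpl w u) ++ u.drop (cpl w u)

/-- `w ∼_x u` in the canonical game: every edge along the unique simple path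
between `w` and `u` is labelled with `x`. -/
def csimVar (x : V) (w u : List (Block P V A B)) : Prop :=
  ∀ bl ∈ pathBlocks w u, x ∈ bl.X

/-- `w ∼_X u` in the canonical game. -/
def csim (X : Set V) (w u : List (Block P V A B)) : Prop :=
  ∀ x ∈ X, csimVar x w u

/-- The canonical mechanism `M`. -/
def Mech (T0 : Set V) (F0 : Set (Formula P V A))
    (w : CState T0 F0 B) (δ : A → Formula P V A × CState T0 F0 B)
    (v : CState T0 F0 B) : Prop :=
  ∀ (C : Set A) (T X : Set V) (φ : Formula P V A),
    Formula.str C T X φ ∈ cF F0 w.1 →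
    (∀ a ∈ C, (δ a).1 = φ) →
    (∀ a ∈ C, csim X w.1 (δ a).2.1) →
    T ⊆ cTrust T0 w.1 → T ⊆ cTrust T0 v.1 →
    φ ∈ cF F0 v.1

/-- Satisfaction `w ⊨ φ` on the canonical game (as `CSat T0 F0 φ w`). -/
def CSat (T0 : Set V) (F0 : Set (Formula P V A)) :
    Formula P V A → CState T0 F0 B → Prop
  | Formula.atom p, w => Formula.atom p ∈ cF F0 w.1
  | Formula.neg φ, w => ¬ CSat T0 F0 φ w
  | Formula.imp φ ψ, w => CSat T0 F0 φ w → CSat T0 F0 ψ w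
  | Formula.bel T X φ, w =>
      ∀ u : CState T0 F0 B, csim X w.1 u.1 → T ⊆ cTrust T0 u.1 → CSat T0 F0 φ u
  | Formula.str C T X φ, w =>
      ∃ s : {a : A // a ∈ C} → Formula P V A × CState T0 F0 B,
        ∀ (u v : CState T0 F0 B) (δ : A → Formula P V A × CState T0 F0 B),
          csim X w.1 u.1 → T ⊆ cTrust T0 u.1 →
          (∀ (a : A) (h : a ∈ C), s ⟨a, h⟩ = δ a) →
          Mech T0 F0 u δ v → T ⊆ cTrust T0 v.1 → CSat T0 F0 φ v

/- ===================== Harmony ===================== -/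

/-- Conjunction definable from ¬ and →. -/
def fand (φ ψ : Formula P V A) : Formula P V A :=
  Formula.neg (Formula.imp φ (Formula.neg ψ))

/-- A canonical tautology (verum). -/
noncomputable def verum (P V A : Type) [Nonempty (Formula P V A)] : Formula P V A :=
  Formula.imp (Classical.arbitrary (Formula P V A)) (Classical.arbitrary (Formula P V A))

/-- Conjunction of a finite list of formulae. -/
noncomputable def conjList [Nonempty (Formula P V A)] :
    List (Formula P V A) → Formula P V A
  | [] => verum P V A
  | φ :: l => fand φ (conjList l)

/-- The pair `(F, G)` is in `T`-harmony: `F ⊬ [∅]^T_V ¬⋀G'` for each finite `G' ⊆ G`. -/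
def THarmony [Nonempty (Formula P V A)] (T : Set V)
    (F G : Set (Formula P V A)) : Prop :=
  ∀ l : List (Formula P V A), (∀ ψ ∈ l, ψ ∈ G) →
    ¬ Deduces F (Formula.str ∅ T (Set.univ : Set V) (Formula.neg (conjList l)))

theorem simSet_refl' {P V A : Type} (G : Game P V A) (X : Set V) (w : G.W) :
    G.simSet X w w := fun x _ => (G.sim_equiv x).refl w

theorem simSet_symm' {P V A : Type} {G : Game P V A} {X : Set V} {w u : G.W}
    (h : G.simSet X w u) : G.simSet X u w := fun x hx => (G.sim_equiv x).symm (h x hx)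

theorem simSet_trans' {P V A : Type} {G : Game P V A} {X : Set V} {w u v : G.W}
    (h : G.simSet X w u) (h' : G.simSet X u v) : G.simSet X w v :=
  fun x hx => (G.sim_equiv x).trans (h x hx) (h' x hx)

/-- Soundness: if ⊢ φ then w ⊨ φ for each state w of an arbitrary game. -/
theorem soundness {P V A : Type} {φ : Formula P V A} (h : Thm φ) :
    ∀ (G : Game P V A) (w : G.W), Sat G φ w := by
  intro G
  obtain ⟨d⟩ := G.delta_nonempty
  induction h with
  | taut h =>
    intro w
    exact h (fun ψ => Sat G ψ w) (fun ψ => by simp only [Sat]) (fun ψ χ => by simp only [Sat])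
  | truth =>
    intro w
    simp only [Sat]
    exact fun h => h w (simSet_refl' G _ w) (Set.empty_subset _)
  | negIntro =>
    intro w
    simp only [Sat]
    exact fun h u hu _ h' => h fun v hv ht => h' v (simSet_trans' (simSet_symm' hu) hv) ht
  | distrib =>
    intro w
    simp only [Sat]
    exact fun h h' u hu ht => h u hu ht (h' u hu ht)
  | trust =>
    intro w
    simp only [Sat]
    exact fun u _ ht h => h u (simSet_refl' G _ u) ht
  | monoB hT hX =>
    intro w
    simp only [Sat]
    exact fun h u hu ht => h u (fun x hx => hu x (hX hx)) (hT.trans ht)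
  | @monoS C C' T T' X X' φ hT hX hC =>
    intro w
    simp only [Sat]
    rintro ⟨s, hs⟩
    classical
    refine ⟨fun a => if h : a.1 ∈ C then s ⟨a.1, h⟩ else d, ?_⟩
    intro u v δ hu htu hδ hM htv
    refine hs u v δ (fun x hx => hu x (hX hx)) (hT.trans htu) ?_ hM (hT.trans htv)
    intro a ha
    have := hδ a (hC ha)
    simpa [ha] using this
  | @coop C D T X φ ψ hCD =>
    intro w
    simp only [Sat]
    rintro ⟨s, hs⟩ ⟨t, ht⟩
    classical
    refine ⟨fun a => if h : a.1 ∈ C then s ⟨a.1, h⟩ else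
      if h : a.1 ∈ D then t ⟨a.1, h⟩ else d, ?_⟩
    intro u v δ hu htu hδ hM htv
    refine hs u v δ hu htu ?_ hM htv (ht u v δ hu htu ?_ hM htv)
    · intro a ha
      have := hδ a (Or.inl ha)
      simpa [ha] using this
    · intro a ha
      have hn : a ∉ C := fun hc => by
        have : a ∈ C ∩ D := ⟨hc, ha⟩
        rw [hCD] at this
        exact this
      have := hδ a (Or.inr ha)
      simpa [ha, hn] using this
  | strIntro₁ =>
    intro w
    simp only [Sat]
    rintro ⟨s, hs⟩ u hu _
    exact ⟨s, fun u' v δ hu' => hs u' v δ (simSet_trans' hu hu')⟩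
  | @strIntro₂ C T X φ =>
    intro w
    simp only [Sat]
    intro h
    by_cases hex : ∃ u, G.simSet X w u ∧ T ⊆ G.trust u
    · obtain ⟨u, hu, ht⟩ := hex
      obtain ⟨s, hs⟩ := h u hu ht
      exact ⟨s, fun u' v δ hu' => hs u' v δ (simSet_trans' (simSet_symm' hu) hu')⟩
    · exact ⟨fun _ => d, fun u v δ hu ht => absurd ⟨u, hu, ht⟩ hex⟩
  | unavoid =>
    intro w
    simp only [Sat]
    intro h
    refine ⟨fun _ => d, fun u v δ hu ht _ hM htv => ?_⟩
    obtain ⟨s, hs⟩ := h u hu ht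
    exact hs u v δ (simSet_refl' G _ u) ht (fun a ha => absurd ha (Set.notMem_empty a)) hM htv
  | pub =>
    intro w
    simp only [Sat]
    intro h
    exact ⟨fun _ => d, fun u v δ _ _ _ _ htv =>
      h v (fun x hx => absurd hx (Set.notMem_empty x)) htv⟩
  | mp _ _ ih₁ ih₂ =>
    intro w
    have := ih₁ w
    simp only [Sat] at this
    exact this (ih₂ w)
  | nec _ ih =>
    intro w
    simp only [Sat]
    exact fun u _ _ => ih u
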